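/- arXiv:2605.23283 — 2 statements merged into one kernel-verified Lean document; each statement's English description precedes it below -/
import Mathlib

section
/- Let H be a finite simple graph on vertex set V, let w : V → ℝ be positive, and let x : V → ℝ be nonnegative with ∑_v x_v² = 1. For each edge uv ∈ E(H) let c_H(uv) be the maximum size of a clique of H containing both u and v, and for each vertex v set δ_v = 1 − 2/c_H(v) if v is incident to some edge of H (where c_H(v) is the maximum size of a clique of H containing v), and δ_v = 0 if v is isolated in H. Then 2·∑_{uv ∈ E(H)} ((c_H(uv) − 2)/(c_H(uv) − 1))·√(w(u)w(v))·x_u x_v ≤ ∑_{v ∈ V} δ_v·w(v). -/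
open scoped Classical
open Finset

variable {V : Type*}

noncomputable def adjMx [Fintype V] (G : SimpleGraph V) : Matrix V V ℝ :=
  Matrix.of fun u v => if G.Adj u v then 1 else 0

noncomputable def degMx [Fintype V] [DecidableEq V] (G : SimpleGraph V) : Matrix V V ℝ :=
  Matrix.diagonal fun v => ∑ u, if G.Adj v u then (1 : ℝ) else 0

noncomputable def signlessLap [Fintype V] [DecidableEq V] (G : SimpleGraph V) : Matrix V V ℝ :=
  degMx G + adjMx G

lemma adjMx_isHermitian [Fintype V] (G : SimpleGraph V) : (adjMx G).IsHermitian := by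
  ext u v
  simp [adjMx, Matrix.conjTranspose_apply, SimpleGraph.adj_comm]

lemma signlessLap_isHermitian [Fintype V] [DecidableEq V] (G : SimpleGraph V) :
    (signlessLap G).IsHermitian :=
  (Matrix.isHermitian_diagonal _).add (adjMx_isHermitian G)

noncomputable def maxEig [Fintype V] [DecidableEq V] {A : Matrix V V ℝ}
    (hA : A.IsHermitian) : ℝ := ⨆ v, hA.eigenvalues v

noncomputable def qIndex [Fintype V] [DecidableEq V] (G : SimpleGraph V) : ℝ :=
  maxEig (signlessLap_isHermitian G)

noncomputable def lambda1 [Fintype V] [DecidableEq V] (G : SimpleGraph V) : ℝ :=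
  maxEig (adjMx_isHermitian G)

/-- Maximum size of a clique of `G` containing vertex `v`. -/
noncomputable def cliqueAt (G : SimpleGraph V) (v : V) : ℕ :=
  sSup {n | ∃ s : Finset V, G.IsNClique n s ∧ v ∈ s}

/-- Maximum size of a clique of `G` containing both `u` and `v`. -/
noncomputable def cliqueAtEdge (G : SimpleGraph V) (u v : V) : ℕ :=
  sSup {n | ∃ s : Finset V, G.IsNClique n s ∧ u ∈ s ∧ v ∈ s}

/-!
The proof rests on a localized Motzkin–Straus inequality: weighting each edge `uv` by
`c(uv) / (c(uv) - 1)`, the quadratic form of the weighted adjacency matrix is at most `(∑ z_v)²`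
at every `z ≥ 0`. If two non-adjacent vertices carry mass, the form is affine in the amount of
mass moved between them, so all the mass of one can be moved to the other without decreasing the
form. One may therefore assume that the support is a clique, of size `k` say. Then every edge that
matters has weight at most `k / (k - 1)`, and Cauchy–Schwarz finishes.

For the theorem, evaluate this at `z_v = √(δ_v w_v) |x_v|`. Since
`(c - 2) / (c - 1) = (c / (c - 1)) (1 - 2 / c)` and `1 - 2 / c(uv)` is at most both `δ_u` and `δ_v`,
hence at most `√(δ_u δ_v)`, the form dominates the left-hand side, while `(∑ z_v)²` is at most
`(∑ δ_v w_v) (∑ x_v²)` by Cauchy–Schwarz.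
-/

lemma cliqueAtEdge_comm (G : SimpleGraph V) (u v : V) :
    cliqueAtEdge G u v = cliqueAtEdge G v u := by
  simp only [cliqueAtEdge, and_comm (a := u ∈ _)]

section CliqueNumbers

variable [Finite V] {G : SimpleGraph V} {u v : V}

lemma bddAbove_card_isNClique (G : SimpleGraph V) (p : Finset V → Prop) :
    BddAbove {n | ∃ s : Finset V, G.IsNClique n s ∧ p s} := by
  cases nonempty_fintype V
  refine ⟨Fintype.card V, ?_⟩
  rintro n ⟨s, hs, -⟩
  exact hs.card_eq ▸ s.card_le_univ

lemma card_le_cliqueAtEdge {s : Finset V} (hs : G.IsClique s) (hu : u ∈ s) (hv : v ∈ s) :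
    #s ≤ cliqueAtEdge G u v :=
  le_csSup (bddAbove_card_isNClique G _) ⟨s, ⟨hs, rfl⟩, hu, hv⟩

lemma two_le_cliqueAtEdge (h : G.Adj u v) : 2 ≤ cliqueAtEdge G u v := by
  have hclique : G.IsClique (({u, v} : Finset V) : Set V) := by
    simpa only [coe_pair, SimpleGraph.isClique_pair] using fun _ => h
  simpa only [card_pair h.ne] using card_le_cliqueAtEdge (u := u) (v := v) hclique
    (mem_insert_self u {v}) (mem_insert_of_mem (mem_singleton_self v))

lemma cliqueAtEdge_le_cliqueAt (G : SimpleGraph V) (u v : V) :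
    cliqueAtEdge G u v ≤ cliqueAt G u := by
  refine csSup_le' ?_
  rintro n ⟨s, hs, hu, -⟩
  exact le_csSup (bddAbove_card_isNClique G _) ⟨s, hs, hu⟩

end CliqueNumbers

lemma exists_not_adj_le_of_not_isClique {α : Type*} [LinearOrder α] {G : SimpleGraph V} {s : Set V}
    (hs : ¬ G.IsClique s) (f : V → α) :
    ∃ a ∈ s, ∃ b ∈ s, a ≠ b ∧ ¬ G.Adj a b ∧ f b ≤ f a := by
  obtain ⟨⟨a, ha⟩, ⟨b, hb⟩, hab, hadj⟩ := G.not_isClique_iff.mp hs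
  have hne : a ≠ b := fun h => hab (Subtype.ext h)
  rcases le_total (f b) (f a) with hle | hle
  · exact ⟨a, ha, b, hb, hne, hadj, hle⟩
  · exact ⟨b, hb, a, ha, hne.symm, fun h => hadj h.symm, hle⟩

section Symmetrization

open Matrix Function

variable [Fintype V] {R : Type*} [CommRing R]

lemma dotProduct_mulVec_add_single_sub_single [DecidableEq V] {A : Matrix V V R} (hA : A.IsSymm)
    {a b : V} (haa : A a a = 0) (hbb : A b b = 0) (hab : A a b = 0) (z : V → R) (t : R) :
    (z + (Pi.single a t - Pi.single b t)) ⬝ᵥ A *ᵥ (z + (Pi.single a t - Pi.single b t)) =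
      z ⬝ᵥ A *ᵥ z + 2 * t * ((A *ᵥ z) a - (A *ᵥ z) b) := by
  set e : V → R := Pi.single a t - Pi.single b t
  have hba : A b a = 0 := by rw [hA.apply, hab]
  have hlinear : e ⬝ᵥ A *ᵥ z = t * ((A *ᵥ z) a - (A *ᵥ z) b) := by
    simp only [e, sub_dotProduct, single_dotProduct, mul_sub]
  have hcross : z ⬝ᵥ A *ᵥ e = e ⬝ᵥ A *ᵥ z := by
    rw [← dotProduct_transpose_mulVec, hA.eq]
  have hquadratic : e ⬝ᵥ A *ᵥ e = 0 := by
    simp [e, mulVec_sub, sub_dotProduct, haa, hbb, hab, hba]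
  rw [mulVec_add, dotProduct_add, add_dotProduct, add_dotProduct, hcross, hquadratic, hlinear]
  ring

variable [LinearOrder R] [IsStrictOrderedRing R] {G : SimpleGraph V} {A : Matrix V V R}

lemma exists_support_ssubset_dotProduct_mulVec_le (hA : A.IsSymm)
    (hAG : ∀ u v, ¬ G.Adj u v → A u v = 0) {z : V → R} (hz : 0 ≤ z)
    (hclique : ¬ G.IsClique (support z)) :
    ∃ y : V → R, 0 ≤ y ∧ support y ⊂ support z ∧ ∑ v, y v = ∑ v, z v ∧
      z ⬝ᵥ A *ᵥ z ≤ y ⬝ᵥ A *ᵥ y := by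
  obtain ⟨a, ha, b, hb, hab, hadj, hle⟩ := exists_not_adj_le_of_not_isClique hclique (A *ᵥ z)
  set y : V → R := z + (Pi.single a (z b) - Pi.single b (z b))
  have hyb : y b = 0 := by simp [y, hab.symm]
  have hy_of_ne : ∀ v, v ≠ a → v ≠ b → y v = z v := fun v hva hvb => by simp [y, hva, hvb]
  refine ⟨y, fun v => ?_, ?_, ?_, ?_⟩
  · rcases eq_or_ne v b with rfl | hvb
    · exact hyb.ge
    · have hsingle : (0 : V → R) ≤ Pi.single a (z b) := Pi.single_nonneg.mpr (hz b)
      simpa [y, hvb] using add_nonneg (hz v) (hsingle v)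
  · refine (Set.ssubset_iff_of_subset fun v hv => ?_).mpr ⟨b, hb, notMem_support.mpr hyb⟩
    by_contra hzv
    have hva : v ≠ a := fun h => hzv (h ▸ ha)
    have hvb : v ≠ b := fun h => hzv (h ▸ hb)
    exact hv ((hy_of_ne v hva hvb).trans (notMem_support.mp hzv))
  · simp [y, sum_add_distrib]
  · rw [dotProduct_mulVec_add_single_sub_single hA (hAG a a G.irrefl) (hAG b b G.irrefl)
      (hAG a b hadj)]
    have := mul_nonneg (hz b) (sub_nonneg.mpr hle)
    linarith

lemma exists_isClique_support_dotProduct_mulVec_le (hA : A.IsSymm)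
    (hAG : ∀ u v, ¬ G.Adj u v → A u v = 0) {z : V → R} (hz : 0 ≤ z) :
    ∃ y : V → R, 0 ≤ y ∧ G.IsClique (support y) ∧ ∑ v, y v = ∑ v, z v ∧
      z ⬝ᵥ A *ᵥ z ≤ y ⬝ᵥ A *ᵥ y := by
  induction hs : support z using WellFoundedLT.induction generalizing z with
  | ind s ih =>
    by_cases hclique : G.IsClique (support z)
    · exact ⟨z, hz, hclique, rfl, le_rfl⟩
    obtain ⟨z', hz', hsupp, hsum, hle⟩ :=
      exists_support_ssubset_dotProduct_mulVec_le hA hAG hz hclique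
    obtain ⟨y, hy, hyclique, hysum, hyle⟩ := ih (support z') (hs ▸ hsupp) hz' rfl
    exact ⟨y, hy, hyclique, hysum.trans hsum, hle.trans hyle⟩

end Symmetrization

lemma sq_sum_sub_sum_sq_le [Fintype V] {K : Type*} [Field K] [LinearOrder K]
    [IsStrictOrderedRing K] (s : Finset V) {y : V → K} (hys : ∀ v ∉ s, y v = 0) :
    (∑ v, y v) ^ 2 - ∑ v, y v ^ 2 ≤ (1 - (#s : K)⁻¹) * (∑ v, y v) ^ 2 := by
  have hsum : ∑ v ∈ s, y v = ∑ v, y v := sum_subset (subset_univ s) fun v _ hv => hys v hv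
  have hsum_sq : ∑ v ∈ s, y v ^ 2 = ∑ v, y v ^ 2 :=
    sum_subset (subset_univ s) fun v _ hv => by rw [hys v hv, zero_pow two_ne_zero]
  have hcauchy : (#s : K)⁻¹ * (∑ v, y v) ^ 2 ≤ ∑ v, y v ^ 2 := by
    rw [← hsum, ← hsum_sq]
    exact inv_mul_le_of_le_mul₀ (by positivity) (by positivity) sq_sum_le_card_mul_sum_sq
  linarith

section MotzkinStraus

open Matrix Function

/-- The adjacency matrix of `G` with each edge `uv` weighted by `c / (c - 1)`, where
`c = cliqueAtEdge G u v`; it is the matrix of the localized Motzkin–Straus inequality. The weight is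
written `(1 - c⁻¹)⁻¹`, which is the same for `c ≥ 2`: with this form, `(1 - k⁻¹)⁻¹ * (1 - k⁻¹) ≤ 1`
needs no separate treatment of cliques of size `k ≤ 1`. -/
noncomputable def motzkinStrausMatrix (G : SimpleGraph V) : Matrix V V ℝ :=
  Matrix.of fun u v => if G.Adj u v then (1 - (cliqueAtEdge G u v : ℝ)⁻¹)⁻¹ else 0

lemma motzkinStrausMatrix_of_adj {G : SimpleGraph V} {u v : V} (h : G.Adj u v) :
    motzkinStrausMatrix G u v = (1 - (cliqueAtEdge G u v : ℝ)⁻¹)⁻¹ :=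
  if_pos h

lemma motzkinStrausMatrix_of_not_adj {G : SimpleGraph V} {u v : V} (h : ¬ G.Adj u v) :
    motzkinStrausMatrix G u v = 0 :=
  if_neg h

lemma motzkinStrausMatrix_isSymm (G : SimpleGraph V) : (motzkinStrausMatrix G).IsSymm :=
  Matrix.IsSymm.ext fun u v => by
    simp only [motzkinStrausMatrix, of_apply, G.adj_comm u v, cliqueAtEdge_comm G u v]

lemma motzkinStrausMatrix_nonneg (G : SimpleGraph V) (u v : V) : 0 ≤ motzkinStrausMatrix G u v := by
  by_cases h : G.Adj u v
  · rw [motzkinStrausMatrix_of_adj h]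
    exact inv_nonneg.mpr (sub_nonneg.mpr (Nat.cast_inv_le_one _))
  · rw [motzkinStrausMatrix_of_not_adj h]

lemma motzkinStrausMatrix_le_of_isClique [Finite V] {G : SimpleGraph V} {s : Finset V}
    (hs : G.IsClique s) {u v : V} (hu : u ∈ s) (hv : v ∈ s) (huv : u ≠ v) :
    motzkinStrausMatrix G u v ≤ (1 - (#s : ℝ)⁻¹)⁻¹ := by
  have hs_one_lt : (1 : ℝ) < #s := mod_cast one_lt_card.mpr ⟨u, hu, v, hv, huv⟩
  have hs_le : (#s : ℝ) ≤ cliqueAtEdge G u v := mod_cast card_le_cliqueAtEdge hs hu hv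
  rw [motzkinStrausMatrix_of_adj (hs hu hv huv)]
  have hpos : 0 < 1 - (#s : ℝ)⁻¹ := sub_pos.mpr (inv_lt_one_of_one_lt₀ hs_one_lt)
  gcongr

variable [Fintype V] {G : SimpleGraph V}

lemma motzkinStrausMatrix_mulVec_le_of_isClique {s : Finset V} (hs : G.IsClique s) {y : V → ℝ}
    (hy : 0 ≤ y) (hys : ∀ v ∉ s, y v = 0) {u : V} (hu : u ∈ s) :
    (motzkinStrausMatrix G *ᵥ y) u ≤ (1 - (#s : ℝ)⁻¹)⁻¹ * (∑ v, y v - y u) := by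
  rw [← sum_erase_eq_sub (mem_univ u), mul_sum, mulVec, dotProduct,
    ← sum_erase univ (a := u) (by rw [motzkinStrausMatrix_of_not_adj G.irrefl, zero_mul])]
  refine sum_le_sum fun v hv => ?_
  by_cases hvs : v ∈ s
  · exact mul_le_mul_of_nonneg_right
      (motzkinStrausMatrix_le_of_isClique hs hu hvs (ne_of_mem_erase hv).symm) (hy v)
  · rw [hys v hvs, mul_zero, mul_zero]

lemma dotProduct_motzkinStrausMatrix_mulVec_le_of_isClique {s : Finset V} (hs : G.IsClique s)
    {y : V → ℝ} (hy : 0 ≤ y) (hys : ∀ v ∉ s, y v = 0) :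
    y ⬝ᵥ motzkinStrausMatrix G *ᵥ y ≤ (∑ v, y v) ^ 2 := by
  set k : ℝ := (#s : ℝ)
  have hk : 0 ≤ (1 - k⁻¹)⁻¹ := inv_nonneg.mpr (sub_nonneg.mpr (Nat.cast_inv_le_one _))
  calc y ⬝ᵥ motzkinStrausMatrix G *ᵥ y
      ≤ ∑ u, y u * ((1 - k⁻¹)⁻¹ * (∑ v, y v - y u)) := by
        refine sum_le_sum fun u _ => ?_
        by_cases hu : u ∈ s
        · exact mul_le_mul_of_nonneg_left
            (motzkinStrausMatrix_mulVec_le_of_isClique hs hy hys hu) (hy u)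
        · rw [hys u hu, zero_mul, zero_mul]
    _ = (1 - k⁻¹)⁻¹ * ((∑ v, y v) ^ 2 - ∑ v, y v ^ 2) := by
        rw [sq (∑ v, y v), sum_mul, ← sum_sub_distrib, mul_sum]
        exact sum_congr rfl fun u _ => by ring
    _ ≤ (1 - k⁻¹)⁻¹ * ((1 - k⁻¹) * (∑ v, y v) ^ 2) :=
        mul_le_mul_of_nonneg_left (sq_sum_sub_sum_sq_le s hys) hk
    _ ≤ (∑ v, y v) ^ 2 := by
        rw [← mul_assoc]
        exact mul_le_of_le_one_left (sq_nonneg _) inv_mul_le_one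

theorem dotProduct_motzkinStrausMatrix_mulVec_le (G : SimpleGraph V) {z : V → ℝ} (hz : 0 ≤ z) :
    z ⬝ᵥ motzkinStrausMatrix G *ᵥ z ≤ (∑ v, z v) ^ 2 := by
  obtain ⟨y, hy, hclique, hsum, hle⟩ := exists_isClique_support_dotProduct_mulVec_le
    (motzkinStrausMatrix_isSymm G) (fun _ _ => motzkinStrausMatrix_of_not_adj) hz
  rw [← hsum]
  refine hle.trans (dotProduct_motzkinStrausMatrix_mulVec_le_of_isClique
    (s := (support y).toFinset) ?_ hy fun v hv => ?_)
  · rwa [Set.coe_toFinset]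
  · simpa using hv

end MotzkinStraus

section EdgeEstimates

variable [Finite V] {G : SimpleGraph V}

lemma one_sub_two_div_cliqueAtEdge_nonneg {u v : V} (h : G.Adj u v) :
    0 ≤ 1 - 2 / (cliqueAtEdge G u v : ℝ) :=
  sub_nonneg.mpr (div_le_one_of_le₀ (mod_cast two_le_cliqueAtEdge h) (Nat.cast_nonneg _))

lemma one_sub_two_div_cliqueAtEdge_le {u v : V} (h : G.Adj u v) :
    1 - 2 / (cliqueAtEdge G u v : ℝ) ≤ 1 - 2 / (cliqueAt G u : ℝ) := by
  have hpos : 0 < cliqueAtEdge G u v := two_pos.trans_le (two_le_cliqueAtEdge h)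
  have hle := cliqueAtEdge_le_cliqueAt G u v
  gcongr

lemma cliqueAtEdge_sub_two_div_sub_one_eq {u v : V} (h : G.Adj u v) :
    ((cliqueAtEdge G u v : ℝ) - 2) / ((cliqueAtEdge G u v : ℝ) - 1) =
      motzkinStrausMatrix G u v * (1 - 2 / (cliqueAtEdge G u v : ℝ)) := by
  have htwo : (2 : ℝ) ≤ cliqueAtEdge G u v := mod_cast two_le_cliqueAtEdge h
  have hne : (cliqueAtEdge G u v : ℝ) ≠ 0 := by linarith
  have hne' : (cliqueAtEdge G u v : ℝ) - 1 ≠ 0 := by linarith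
  rw [motzkinStrausMatrix_of_adj h]
  field_simp

lemma cliqueAtEdge_sub_two_div_sub_one_nonneg {u v : V} (h : G.Adj u v) :
    0 ≤ ((cliqueAtEdge G u v : ℝ) - 2) / ((cliqueAtEdge G u v : ℝ) - 1) := by
  rw [cliqueAtEdge_sub_two_div_sub_one_eq h]
  exact mul_nonneg (motzkinStrausMatrix_nonneg G u v) (one_sub_two_div_cliqueAtEdge_nonneg h)

lemma cliqueAtEdge_sub_two_div_sub_one_le_mul_sqrt {u v : V} (h : G.Adj u v) {p q : ℝ}
    (hp : 1 - 2 / (cliqueAtEdge G u v : ℝ) ≤ p) (hq : 1 - 2 / (cliqueAtEdge G u v : ℝ) ≤ q) :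
    ((cliqueAtEdge G u v : ℝ) - 2) / ((cliqueAtEdge G u v : ℝ) - 1) ≤
      motzkinStrausMatrix G u v * (√p * √q) := by
  rw [cliqueAtEdge_sub_two_div_sub_one_eq h]
  refine mul_le_mul_of_nonneg_left ?_ (motzkinStrausMatrix_nonneg G u v)
  rw [← Real.mul_self_sqrt (one_sub_two_div_cliqueAtEdge_nonneg h)]
  gcongr

lemma cliqueAtEdge_mul_sqrt_mul_le {u v : V} (h : G.Adj u v) {p q : ℝ}
    (hp : 1 - 2 / (cliqueAtEdge G u v : ℝ) ≤ p) (hq : 1 - 2 / (cliqueAtEdge G u v : ℝ) ≤ q)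
    {s : ℝ} (hs : 0 ≤ s) (t a b : ℝ) :
    ((cliqueAtEdge G u v : ℝ) - 2) / ((cliqueAtEdge G u v : ℝ) - 1) * √(s * t) * a * b ≤
      √(p * s) * |a| * (motzkinStrausMatrix G u v * (√(q * t) * |b|)) := by
  have hcoeff := cliqueAtEdge_sub_two_div_sub_one_nonneg h
  have hcoeff_le := cliqueAtEdge_sub_two_div_sub_one_le_mul_sqrt h hp hq
  have hp₀ : 0 ≤ p := (one_sub_two_div_cliqueAtEdge_nonneg h).trans hp
  have hq₀ : 0 ≤ q := (one_sub_two_div_cliqueAtEdge_nonneg h).trans hq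
  set γ : ℝ := ((cliqueAtEdge G u v : ℝ) - 2) / ((cliqueAtEdge G u v : ℝ) - 1)
  calc γ * √(s * t) * a * b = γ * √(s * t) * (a * b) := mul_assoc _ _ _
    _ ≤ γ * √(s * t) * |a * b| := by
        gcongr
        exact le_abs_self _
    _ ≤ motzkinStrausMatrix G u v * (√p * √q) * √(s * t) * |a * b| := by gcongr
    _ = √(p * s) * |a| * (motzkinStrausMatrix G u v * (√(q * t) * |b|)) := by
        rw [Real.sqrt_mul hs, Real.sqrt_mul hp₀, Real.sqrt_mul hq₀, abs_mul]
        ring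

end EdgeEstimates

open Matrix in
theorem sum_cliqueAtEdge_le_of_one_sub_two_div_le [Fintype V] {G : SimpleGraph V}
    [DecidableRel G.Adj] {δ w : V → ℝ} (hδ₀ : ∀ v, 0 ≤ δ v)
    (hδ : ∀ u v, G.Adj u v → 1 - 2 / (cliqueAtEdge G u v : ℝ) ≤ δ u)
    (hw : ∀ v, 0 ≤ w v) (x : V → ℝ) :
    ∑ u, ∑ v, (if G.Adj u v then
        ((cliqueAtEdge G u v : ℝ) - 2) / ((cliqueAtEdge G u v : ℝ) - 1)
          * √(w u * w v) * x u * x v else 0)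
      ≤ (∑ v, δ v * w v) * ∑ v, x v ^ 2 := by
  set z : V → ℝ := fun v => √(δ v * w v) * |x v|
  have hz : 0 ≤ z := fun v => by positivity
  have hterm : ∀ u v, (if G.Adj u v then
      ((cliqueAtEdge G u v : ℝ) - 2) / ((cliqueAtEdge G u v : ℝ) - 1)
        * √(w u * w v) * x u * x v else 0) ≤ z u * (motzkinStrausMatrix G u v * z v) := by
    intro u v
    split_ifs with h
    · have hδv := hδ v u h.symm
      rw [cliqueAtEdge_comm] at hδv
      exact cliqueAtEdge_mul_sqrt_mul_le h (hδ u v h) hδv (hw u) (w v) (x u) (x v)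
    · rw [motzkinStrausMatrix_of_not_adj h, zero_mul, mul_zero]
  calc _ ≤ ∑ u, ∑ v, z u * (motzkinStrausMatrix G u v * z v) :=
        sum_le_sum fun u _ => sum_le_sum fun v _ => hterm u v
    _ = z ⬝ᵥ motzkinStrausMatrix G *ᵥ z := by simp only [dotProduct, mulVec, mul_sum]
    _ ≤ (∑ v, z v) ^ 2 := dotProduct_motzkinStrausMatrix_mulVec_le G hz
    _ ≤ (∑ v, √(δ v * w v) ^ 2) * ∑ v, |x v| ^ 2 := sum_mul_sq_le_sq_mul_sq _ _ _
    _ = (∑ v, δ v * w v) * ∑ v, x v ^ 2 := by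
        simp only [Real.sq_sqrt (mul_nonneg (hδ₀ _) (hw _)), sq_abs]

theorem stmt12_general {V : Type*} [Fintype V] (H : SimpleGraph V) [DecidableRel H.Adj]
    (w : V → ℝ) (hw : ∀ v, 0 ≤ w v) (x δ : V → ℝ)
    (hδ : ∀ v, δ v = if 0 < H.degree v then 1 - 2 / (cliqueAt H v : ℝ) else 0) :
    ∑ u, ∑ v, (if H.Adj u v then
        ((cliqueAtEdge H u v : ℝ) - 2) / ((cliqueAtEdge H u v : ℝ) - 1)
          * √(w u * w v) * x u * x v else 0)
      ≤ (∑ v, δ v * w v) * ∑ v, x v ^ 2 := by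
  have hδ_edge : ∀ u v, H.Adj u v → 1 - 2 / (cliqueAtEdge H u v : ℝ) ≤ δ u := by
    intro u v h
    rw [hδ, if_pos ((H.degree_pos_iff_exists_adj u).mpr ⟨v, h⟩)]
    exact one_sub_two_div_cliqueAtEdge_le h
  have hδ_nonneg : ∀ v, 0 ≤ δ v := by
    intro v
    by_cases hdeg : 0 < H.degree v
    · obtain ⟨u, h⟩ := (H.degree_pos_iff_exists_adj v).mp hdeg
      exact (one_sub_two_div_cliqueAtEdge_nonneg h).trans (hδ_edge v u h)
    · rw [hδ, if_neg hdeg]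
  exact sum_cliqueAtEdge_le_of_one_sub_two_div_le hδ_nonneg hδ_edge hw x

/-- The key estimate in the proof of the weighted signed bound:
`2 ∑_{uv ∈ E(H)} ((c_H(uv)-2)/(c_H(uv)-1)) √(w_u w_v) x_u x_v ≤ ∑_v δ_v w_v`.
(The double sum over ordered adjacent pairs counts each edge twice,
which accounts for the factor `2`.) -/
theorem stmt12 {V : Type*} [Fintype V] [DecidableEq V]
    (H : SimpleGraph V) [DecidableRel H.Adj]
    (w : V → ℝ) (hw : ∀ v, 0 < w v)
    (x : V → ℝ) (hx : ∀ v, 0 ≤ x v) (hsum : ∑ v, (x v) ^ 2 = 1)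
    (δ : V → ℝ)
    (hδ : ∀ v, δ v = if 0 < H.degree v then 1 - 2 / (cliqueAt H v : ℝ) else 0) :
    ∑ u, ∑ v, (if H.Adj u v then
        ((cliqueAtEdge H u v : ℝ) - 2) / ((cliqueAtEdge H u v : ℝ) - 1)
          * Real.sqrt (w u * w v) * x u * x v else 0)
      ≤ ∑ v, δ v * w v := by
  simpa only [hsum, mul_one] using stmt12_general H w (fun v => (hw v).le) x δ hδ
end

section
/- Let Γ = (G, σ) be a signed graph on a finite vertex set of n vertices with m edges and balanced clique number ω_b(Γ) ≥ 1. Then the largest eigenvalue of its adjacency matrix satisfies λ₁(A(Γ))² ≤ 2m·(1 − 1/ω_b(Γ)). -/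
open scoped Classical
open Finset

variable {V : Type*}

/-- A balanced clique of the signed graph `(G, σ)`: a clique of `G` admitting a switching
function `η` with values `±1` such that `σ u v = η u * η v` on all its edges. -/
def IsBalancedClique (G : SimpleGraph V) (σ : V → V → ℝ) (s : Finset V) : Prop :=
  G.IsClique ↑s ∧ ∃ η : V → ℝ, (∀ v ∈ s, η v = 1 ∨ η v = -1) ∧
    ∀ u ∈ s, ∀ v ∈ s, u ≠ v → σ u v = η u * η v

/-- The balanced clique number of the signed graph `(G, σ)`. -/
noncomputable def balancedCliqueNum (G : SimpleGraph V) (σ : V → V → ℝ) : ℕ :=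
  sSup {n | ∃ s : Finset V, s.card = n ∧ IsBalancedClique G σ s}

/-- Maximum size of a balanced clique of the signed graph `(G, σ)` containing `v`. -/
noncomputable def balancedCliqueAt (G : SimpleGraph V) (σ : V → V → ℝ) (v : V) : ℕ :=
  sSup {n | ∃ s : Finset V, s.card = n ∧ IsBalancedClique G σ s ∧ v ∈ s}

/-!
Let `x` be a unit eigenvector for `λ₁`, so that `λ₁ = ∑ A u v * x u * x v`. Dropping the nonpositive
terms and applying Cauchy–Schwarz gives `λ₁² ≤ 2m * ∑ (x u)² (x v)²`, the last sum being over the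
pairs `(u, v)` with `A u v * x u * x v > 0`. These pairs are the adjacent pairs of a graph, and a
clique of that graph is a balanced clique of the signed graph, switched by the signs of `x`. The
Motzkin–Straus inequality for the weights `(x v)²`, whose sum is `1`, bounds the sum by `1 - 1/ω_b`.

For the Motzkin–Straus inequality, the quadratic form is affine in the amount of weight transferred
between two nonadjacent vertices, so that moving all the weight in one of the two directions does
not decrease it. Such transfers shrink the support until it is a clique, where Cauchy–Schwarz ends
the proof.
-/

open Matrix Function

section Transfer

variable {R : Type*} [DecidableEq V]

/-- The weighting obtained from `y` by moving all the weight of `v` to `u`; these are the steps of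
the symmetrization argument for the Motzkin–Straus inequality. -/
def transferWeight [AddCommGroup R] (y : V → R) (u v : V) : V → R :=
  y + Pi.single u (y v) - Pi.single v (y v)

lemma sum_transferWeight [AddCommGroup R] [Fintype V] (y : V → R) (u v : V) :
    ∑ w, transferWeight y u v w = ∑ w, y w := by
  simp [transferWeight, sum_add_distrib, sum_sub_distrib]

lemma transferWeight_nonneg [AddCommGroup R] [PartialOrder R] [IsOrderedAddMonoid R] {y : V → R}
    (hy : 0 ≤ y) (u v : V) : 0 ≤ transferWeight y u v := by
  intro w
  have hsingle : 0 ≤ (Pi.single u (y v) : V → R) w :=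
    (Pi.single_nonneg (α := fun _ => R)).2 (hy v) w
  rcases eq_or_ne w v with rfl | hwv
  · simpa [transferWeight] using hsingle
  · simpa [transferWeight, hwv] using add_nonneg (hy w) hsingle

lemma support_transferWeight_ssubset [AddCommGroup R] {y : V → R} {u v : V} (huv : u ≠ v)
    (hu : y u ≠ 0) (hv : y v ≠ 0) : support (transferWeight y u v) ⊂ support y := by
  refine Set.ssubset_iff_of_subset (fun w hw => ?_) |>.2 ⟨v, hv, by simp [transferWeight, huv.symm]⟩
  rcases eq_or_ne w u with rfl | hwu
  · exact hu
  rcases eq_or_ne w v with rfl | hwv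
  · exact hv
  · simpa [transferWeight, hwu, hwv] using hw

end Transfer

section MotzkinStraus

lemma dotProduct_mulVec_add_self_of_isSymm {R : Type*} [CommRing R] [Fintype V]
    {M : Matrix V V R} (hM : M.IsSymm) (x d : V → R) :
    (x + d) ⬝ᵥ M *ᵥ (x + d) = x ⬝ᵥ M *ᵥ x + 2 * (d ⬝ᵥ M *ᵥ x) + d ⬝ᵥ M *ᵥ d := by
  have hcomm : x ⬝ᵥ M *ᵥ d = d ⬝ᵥ M *ᵥ x := by
    rw [dotProduct_mulVec, ← mulVec_transpose, hM.eq, dotProduct_comm]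
  rw [mulVec_add, add_dotProduct, dotProduct_add, dotProduct_add, hcomm]
  ring

variable {R : Type*} [Fintype V] (G : SimpleGraph V)

lemma sq_sum_le_mul_sum_sq_of_isClique [CommRing R] [LinearOrder R] [IsStrictOrderedRing R]
    {k : ℕ} (hG : G.CliqueFree (k + 1)) {y : V → R} (hy : G.IsClique (support y)) :
    (∑ v, y v) ^ 2 ≤ k * ∑ v, y v ^ 2 := by
  have hcard : #{v | y v ≠ 0} ≤ k := by
    by_contra! hlt
    exact hG.mono hlt _ ⟨by simpa [support] using hy, rfl⟩
  calc (∑ v, y v) ^ 2 = (∑ v with y v ≠ 0, y v) ^ 2 := by rw [sum_filter_ne_zero]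
    _ ≤ #{v | y v ≠ 0} * ∑ v with y v ≠ 0, y v ^ 2 := sq_sum_le_card_mul_sum_sq
    _ ≤ k * ∑ v, y v ^ 2 := by
      gcongr
      exact filter_subset _ _

variable [DecidableRel G.Adj]

lemma dotProduct_adjMatrix_mulVec_transferWeight [DecidableEq V] [CommRing R] (y : V → R)
    {u v : V} (huv : ¬ G.Adj u v) :
    transferWeight y u v ⬝ᵥ G.adjMatrix R *ᵥ transferWeight y u v =
      y ⬝ᵥ G.adjMatrix R *ᵥ y +
        2 * (y v * ((G.adjMatrix R *ᵥ y) u - (G.adjMatrix R *ᵥ y) v)) := by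
  set d : V → R := Pi.single u (y v) - Pi.single v (y v) with hd
  have hlin : d ⬝ᵥ G.adjMatrix R *ᵥ y =
      y v * ((G.adjMatrix R *ᵥ y) u - (G.adjMatrix R *ᵥ y) v) := by
    simp only [hd, sub_dotProduct, single_dotProduct, mul_sub]
  have hquad : d ⬝ᵥ G.adjMatrix R *ᵥ d = 0 := by
    simp [hd, sub_dotProduct, mulVec_sub, huv, G.adj_comm v u]
  rw [transferWeight, add_sub_assoc, dotProduct_mulVec_add_self_of_isSymm G.isSymm_adjMatrix,
    hlin, hquad, add_zero]

lemma sum_sq_add_dotProduct_adjMatrix_mulVec_of_isClique [CommRing R] {y : V → R}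
    (hy : G.IsClique (support y)) :
    ∑ v, y v ^ 2 + y ⬝ᵥ G.adjMatrix R *ᵥ y = (∑ v, y v) ^ 2 := by
  have hterm (u v : V) :
      (if u = v then y u * y v else 0) + (if G.Adj u v then y u * y v else 0) = y u * y v := by
    rcases eq_or_ne u v with rfl | huv
    · simp
    by_cases hadj : G.Adj u v
    · simp [huv, hadj]
    · have : y u = 0 ∨ y v = 0 := by
        by_contra! hne
        exact hadj (hy hne.1 hne.2 huv)
      rcases this with h | h <;> simp [h]
  calc ∑ v, y v ^ 2 + y ⬝ᵥ G.adjMatrix R *ᵥ y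
      = ∑ u, ∑ v, ((if u = v then y u * y v else 0) + if G.Adj u v then y u * y v else 0) := by
        simp [G.dotProduct_mulVec_adjMatrix, sum_add_distrib, sq]
    _ = (∑ v, y v) ^ 2 := by simp only [hterm, sq, sum_mul_sum]

section LinearOrderedRing

variable [CommRing R] [LinearOrder R] [IsStrictOrderedRing R]

lemma exists_support_ssubset_of_not_isClique {y : V → R} (hy : 0 ≤ y)
    (hcl : ¬ G.IsClique (support y)) :
    ∃ z : V → R, 0 ≤ z ∧ ∑ v, z v = ∑ v, y v ∧ support z ⊂ support y ∧
      y ⬝ᵥ G.adjMatrix R *ᵥ y ≤ z ⬝ᵥ G.adjMatrix R *ᵥ z := by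
  obtain ⟨u, hu, v, hv, huv, hadj⟩ :
      ∃ u, y u ≠ 0 ∧ ∃ v, y v ≠ 0 ∧ u ≠ v ∧ ¬ G.Adj u v := by
    simpa [SimpleGraph.isClique_iff, Set.Pairwise] using hcl
  wlog hle : (G.adjMatrix R *ᵥ y) v ≤ (G.adjMatrix R *ᵥ y) u generalizing u v
  · exact this v hv u hu huv.symm (mt SimpleGraph.Adj.symm hadj) (le_of_not_ge hle)
  refine ⟨transferWeight y u v, transferWeight_nonneg hy u v, sum_transferWeight y u v,
    support_transferWeight_ssubset huv hu hv, ?_⟩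
  rw [dotProduct_adjMatrix_mulVec_transferWeight G y hadj, le_add_iff_nonneg_right]
  exact mul_nonneg zero_le_two (mul_nonneg (hy v) (sub_nonneg.2 hle))

lemma exists_isClique_support {y : V → R} (hy : 0 ≤ y) :
    ∃ z : V → R, G.IsClique (support z) ∧ ∑ v, z v = ∑ v, y v ∧
      y ⬝ᵥ G.adjMatrix R *ᵥ y ≤ z ⬝ᵥ G.adjMatrix R *ᵥ z := by
  induction hs : support y using WellFoundedLT.induction generalizing y with
  | ind s ih =>
    by_cases hcl : G.IsClique (support y)
    · exact ⟨y, hcl, rfl, le_rfl⟩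
    · obtain ⟨y', hy', hsum', hlt, hle'⟩ := exists_support_ssubset_of_not_isClique G hy hcl
      obtain ⟨z, hz, hsum, hle⟩ := ih _ (hs ▸ hlt) hy' rfl
      exact ⟨z, hz, hsum.trans hsum', hle'.trans hle⟩

end LinearOrderedRing

/-- **Motzkin–Straus inequality**. For `k = 0`, where `1 / k = 0`, there are no vertices. -/
theorem dotProduct_adjMatrix_mulVec_le_of_cliqueFree [Field R] [LinearOrder R]
    [IsStrictOrderedRing R] {k : ℕ} (hG : G.CliqueFree (k + 1))
    {y : V → R} (hy : 0 ≤ y) :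
    y ⬝ᵥ G.adjMatrix R *ᵥ y ≤ (1 - 1 / k) * (∑ v, y v) ^ 2 := by
  obtain ⟨z, hz, hsum, hle⟩ := exists_isClique_support G hy
  have hsq : (∑ v, z v) ^ 2 / k ≤ ∑ v, z v ^ 2 :=
    div_le_of_le_mul₀ k.cast_nonneg (sum_nonneg fun v _ => sq_nonneg (z v))
      ((sq_sum_le_mul_sum_sq_of_isClique G hG hz).trans_eq (mul_comm _ _))
  calc y ⬝ᵥ G.adjMatrix R *ᵥ y ≤ z ⬝ᵥ G.adjMatrix R *ᵥ z := hle
    _ = (∑ v, z v) ^ 2 - ∑ v, z v ^ 2 :=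
      eq_sub_of_add_eq' (sum_sq_add_dotProduct_adjMatrix_mulVec_of_isClique G hz)
    _ ≤ (∑ v, z v) ^ 2 - (∑ v, z v) ^ 2 / k := sub_le_sub_left hsq _
    _ = (1 - 1 / k) * (∑ v, y v) ^ 2 := by rw [hsum]; ring

end MotzkinStraus

section PositiveSupport

variable {R : Type*}

lemma sq_sum_mul_le_sum_sq_mul_sum_filter_pos [CommRing R] [LinearOrder R]
    [IsStrictOrderedRing R] {ι : Type*} (s : Finset ι) (f g : ι → R)
    (hfg : 0 ≤ ∑ i ∈ s, f i * g i) :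
    (∑ i ∈ s, f i * g i) ^ 2 ≤ (∑ i ∈ s, f i ^ 2) * ∑ i ∈ s with 0 < f i * g i, g i ^ 2 := by
  have hdrop : ∑ i ∈ s, f i * g i ≤ ∑ i ∈ s with 0 < f i * g i, f i * g i := by
    rw [sum_filter]
    refine sum_le_sum fun i _ => ?_
    split_ifs with hi
    exacts [le_rfl, not_lt.1 hi]
  calc (∑ i ∈ s, f i * g i) ^ 2 ≤ (∑ i ∈ s with 0 < f i * g i, f i * g i) ^ 2 := by gcongr
    _ ≤ (∑ i ∈ s with 0 < f i * g i, f i ^ 2) * ∑ i ∈ s with 0 < f i * g i, g i ^ 2 :=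
      sum_mul_sq_le_sq_mul_sq _ _ _
    _ ≤ (∑ i ∈ s, f i ^ 2) * ∑ i ∈ s with 0 < f i * g i, g i ^ 2 := by
      gcongr
      exact filter_subset _ _

/-- The graph of the pairs of distinct indices that contribute a positive term to the quadratic
form `x ⬝ᵥ A *ᵥ x`. For a matrix that is not symmetric, one positive order of the pair is enough. -/
def positiveSupport [Mul R] [Zero R] [LT R] (A : Matrix V V R) (x : V → R) : SimpleGraph V :=
  SimpleGraph.fromRel fun u v => 0 < A u v * (x u * x v)

lemma sum_filter_pos_le_dotProduct_adjMatrix_mulVec [CommRing R] [LinearOrder R]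
    [IsStrictOrderedRing R] [Fintype V] {A : Matrix V V R} (hA : A.diag = 0) (x : V → R) :
    ∑ p : V × V with 0 < A p.1 p.2 * (x p.1 * x p.2), (x p.1 * x p.2) ^ 2 ≤
      (x ^ 2) ⬝ᵥ (positiveSupport A x).adjMatrix R *ᵥ (x ^ 2) := by
  have hadj {u v : V} (h : 0 < A u v * (x u * x v)) : (positiveSupport A x).Adj u v := by
    refine (SimpleGraph.fromRel_adj _ u v).2 ⟨?_, Or.inl h⟩
    rintro rfl
    simp [show A u u = 0 from congrFun hA u] at h
  calc ∑ p : V × V with 0 < A p.1 p.2 * (x p.1 * x p.2), (x p.1 * x p.2) ^ 2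
      ≤ ∑ p : V × V with (positiveSupport A x).Adj p.1 p.2, (x p.1 * x p.2) ^ 2 :=
        sum_le_sum_of_subset_of_nonneg (monotone_filter_right _ fun _ _ => hadj)
          fun _ _ _ => sq_nonneg _
    _ = (x ^ 2) ⬝ᵥ (positiveSupport A x).adjMatrix R *ᵥ (x ^ 2) := by
        simp only [SimpleGraph.dotProduct_mulVec_adjMatrix, sum_filter, Fintype.sum_prod_type,
          Pi.pow_apply, mul_pow]

theorem sq_dotProduct_mulVec_le_of_cliqueFree [Field R] [LinearOrder R] [IsStrictOrderedRing R]
    [Fintype V] {A : Matrix V V R} (hA : A.diag = 0) {x : V → R}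
    (hx : 0 ≤ x ⬝ᵥ A *ᵥ x) {k : ℕ} (hk : (positiveSupport A x).CliqueFree (k + 1)) :
    (x ⬝ᵥ A *ᵥ x) ^ 2 ≤ (∑ u, ∑ v, A u v ^ 2) * ((1 - 1 / k) * (x ⬝ᵥ x) ^ 2) := by
  have hform : x ⬝ᵥ A *ᵥ x = ∑ p : V × V, A p.1 p.2 * (x p.1 * x p.2) := by
    simp only [dotProduct, mulVec, mul_sum, Fintype.sum_prod_type, mul_left_comm]
  have hnorm : x ⬝ᵥ x = ∑ v, (x ^ 2) v := by simp only [dotProduct, Pi.pow_apply, sq]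
  rw [hform] at hx ⊢
  rw [hnorm, ← Fintype.sum_prod_type']
  refine (sq_sum_mul_le_sum_sq_mul_sum_filter_pos univ _ _ hx).trans ?_
  gcongr
  exact (sum_filter_pos_le_dotProduct_adjMatrix_mulVec hA x).trans
    (dotProduct_adjMatrix_mulVec_le_of_cliqueFree _ hk fun v => sq_nonneg (x v))

end PositiveSupport

section MaxEig

variable [Fintype V] [DecidableEq V] {A : Matrix V V ℝ} (hA : A.IsHermitian)

lemma maxEig_nonneg_of_trace_nonneg (htr : 0 ≤ A.trace) : 0 ≤ maxEig hA := by
  cases isEmpty_or_nonempty V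
  · simp [maxEig]
  · obtain ⟨i, hi⟩ : ∃ i, 0 ≤ hA.eigenvalues i := by
      by_contra! hneg
      refine htr.not_gt ?_
      simpa [hA.trace_eq_sum_eigenvalues] using sum_neg (fun i _ => hneg i) univ_nonempty
    exact Real.iSup_nonneg' ⟨i, hi⟩

lemma exists_dotProduct_mulVec_eq_maxEig [Nonempty V] :
    ∃ x : V → ℝ, x ⬝ᵥ x = 1 ∧ x ⬝ᵥ A *ᵥ x = maxEig hA := by
  obtain ⟨i, hi⟩ : ∃ i, hA.eigenvalues i = maxEig hA := exists_eq_ciSup_of_finite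
  set x : V → ℝ := (hA.eigenvectorBasis i).ofLp
  have hunit : x ⬝ᵥ x = 1 := by
    have hnorm := EuclideanSpace.real_norm_sq_eq (hA.eigenvectorBasis i)
    rw [hA.eigenvectorBasis.norm_eq_one, one_pow] at hnorm
    simpa only [dotProduct, sq] using hnorm.symm
  refine ⟨x, hunit, ?_⟩
  rw [hA.mulVec_eigenvectorBasis i, dotProduct_smul, hunit, hi, smul_eq_mul, mul_one]

theorem sq_maxEig_le_of_cliqueFree (hdiag : A.diag = 0) {k : ℕ}
    (hk : ∀ x, (positiveSupport A x).CliqueFree (k + 1)) :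
    maxEig hA ^ 2 ≤ (∑ u, ∑ v, A u v ^ 2) * (1 - 1 / k) := by
  cases isEmpty_or_nonempty V
  · simp [maxEig]
  · obtain ⟨x, hunit, hx⟩ := exists_dotProduct_mulVec_eq_maxEig hA
    have htr : 0 ≤ A.trace := by simp only [trace, hdiag, Pi.zero_apply, sum_const_zero, le_rfl]
    have hbound := sq_dotProduct_mulVec_le_of_cliqueFree hdiag
      (hx ▸ maxEig_nonneg_of_trace_nonneg hA htr) (hk x)
    simpa [hx, hunit] using hbound

end MaxEig

section SignedGraph

lemma IsBalancedClique.card_le_balancedCliqueNum [Finite V] {G : SimpleGraph V} {σ : V → V → ℝ}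
    {s : Finset V} (hs : IsBalancedClique G σ s) : #s ≤ balancedCliqueNum G σ := by
  have := Fintype.ofFinite V
  refine le_csSup ⟨Fintype.card V, ?_⟩ ⟨s, rfl, hs⟩
  rintro _ ⟨t, rfl, _⟩
  exact card_le_univ t

variable (G : SimpleGraph V) [DecidableRel G.Adj] {σ : V → V → ℝ}

/-- The adjacency matrix of the signed graph `(G, σ)`; the values of `σ` off the edges of `G` are
ignored. -/
def signedAdjMatrix (σ : V → V → ℝ) : Matrix V V ℝ :=
  Matrix.of fun u v => if G.Adj u v then σ u v else 0

lemma diag_signedAdjMatrix : (signedAdjMatrix G σ).diag = 0 := by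
  ext v
  simp [signedAdjMatrix]

lemma sum_sq_signedAdjMatrix [Fintype V] (hσ : ∀ u v, G.Adj u v → σ u v = 1 ∨ σ u v = -1) :
    ∑ u, ∑ v, signedAdjMatrix G σ u v ^ 2 = 2 * #G.edgeFinset := by
  have hentry (u v : V) : signedAdjMatrix G σ u v ^ 2 = if G.Adj u v then 1 else 0 := by
    by_cases h : G.Adj u v
    · simpa [signedAdjMatrix, h] using hσ u v h
    · simp [signedAdjMatrix, h]
  calc ∑ u, ∑ v, signedAdjMatrix G σ u v ^ 2 = ∑ u, (G.degree u : ℝ) := by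
        simp [hentry, ← G.card_neighborFinset_eq_degree, G.neighborFinset_eq_filter]
    _ = 2 * #G.edgeFinset := by exact_mod_cast G.sum_degrees_eq_twice_card_edges

variable {G}

lemma adj_and_pos_of_positiveSupport_adj (hσsymm : ∀ u v, σ u v = σ v u) {x : V → ℝ}
    {u v : V} (h : (positiveSupport (signedAdjMatrix G σ) x).Adj u v) :
    G.Adj u v ∧ 0 < σ u v * (x u * x v) := by
  have hentry {a b : V} (hab : 0 < signedAdjMatrix G σ a b * (x a * x b)) :
      G.Adj a b ∧ 0 < σ a b * (x a * x b) := by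
    by_cases hadj : G.Adj a b <;> simp_all [signedAdjMatrix]
  obtain ⟨-, huv | hvu⟩ := (SimpleGraph.fromRel_adj _ u v).1 h
  · exact hentry huv
  · rw [G.adj_comm, hσsymm, mul_comm (x u)]
    exact hentry hvu

lemma isBalancedClique_of_isClique_positiveSupport (hσsymm : ∀ u v, σ u v = σ v u)
    (hσ : ∀ u v, G.Adj u v → σ u v = 1 ∨ σ u v = -1) {x : V → ℝ} {s : Finset V}
    (hs : (positiveSupport (signedAdjMatrix G σ) x).IsClique s) : IsBalancedClique G σ s := by
  let η v : ℝ := if x v < 0 then -1 else 1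
  have hη (v : V) : η v = 1 ∨ η v = -1 := (ite_eq_or_eq _ _ _).symm
  have hx (v : V) : x v = η v * |x v| := by
    rcases lt_or_ge (x v) 0 with h | h
    · simp [η, h, abs_of_neg h]
    · simp [η, h.not_gt, abs_of_nonneg h]
  have hpos {u v : V} (hu : u ∈ s) (hv : v ∈ s) (huv : u ≠ v) :=
    adj_and_pos_of_positiveSupport_adj hσsymm (hs hu hv huv)
  refine ⟨fun u hu v hv huv => (hpos hu hv huv).1, η, fun v _ => hη v, fun u hu v hv huv => ?_⟩
  obtain ⟨hadj, h⟩ := hpos hu hv huv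
  have hsign : 0 < σ u v * (η u * η v) := by
    rw [hx u, hx v, mul_mul_mul_comm, ← mul_assoc] at h
    exact pos_of_mul_pos_left h (by positivity)
  have hηη : η u * η v = 1 ∨ η u * η v = -1 := by
    rcases hη u with hu | hu <;> rcases hη v with hv | hv <;> simp [hu, hv]
  rcases hσ u v hadj with h₁ | h₁ <;> rcases hηη with h₂ | h₂ <;> rw [h₁, h₂] at hsign ⊢ <;>
    linarith

lemma cliqueFree_positiveSupport [Finite V] (hσsymm : ∀ u v, σ u v = σ v u)
    (hσ : ∀ u v, G.Adj u v → σ u v = 1 ∨ σ u v = -1) (x : V → ℝ) :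
    (positiveSupport (signedAdjMatrix G σ) x).CliqueFree (balancedCliqueNum G σ + 1) := by
  intro s hs
  have hle := (isBalancedClique_of_isClique_positiveSupport hσsymm hσ
    hs.isClique).card_le_balancedCliqueNum
  rw [hs.card_eq] at hle
  exact Nat.not_succ_le_self _ hle

end SignedGraph

/-- Sun–Liu–Lan: for a signed graph `Γ` with `m` edges and balanced clique number
`ω_b(Γ) ≥ 1`, `λ₁(A(Γ))² ≤ 2m (1 - 1/ω_b(Γ))`. -/
theorem stmt16 {V : Type*} [Fintype V] [DecidableEq V]
    (G : SimpleGraph V) [DecidableRel G.Adj]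
    (σ : V → V → ℝ) (hσsymm : ∀ u v, σ u v = σ v u)
    (hσ : ∀ u v, G.Adj u v → σ u v = 1 ∨ σ u v = -1)
    (hωb : 1 ≤ balancedCliqueNum G σ)
    (A : Matrix V V ℝ) (hAdef : ∀ u v, A u v = if G.Adj u v then σ u v else 0)
    (hA : A.IsHermitian) :
    (maxEig hA) ^ 2 ≤
      2 * (G.edgeFinset.card : ℝ) * (1 - 1 / (balancedCliqueNum G σ : ℝ)) := by
  obtain rfl : A = signedAdjMatrix G σ := by
    ext u v
    exact hAdef u v
  rw [← sum_sq_signedAdjMatrix G hσ]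
  exact sq_maxEig_le_of_cliqueFree hA (diag_signedAdjMatrix G)
    (cliqueFree_positiveSupport hσsymm hσ)
end
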